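/- Let Λ be a nonempty finite set, X ⊆ Λ^G a G-subshift, and μ a Markovian Borel probability measure on X. Then the shift action of G on the support of μ has the strong topological Markov property. -/

import Mathlib

open Pointwise

/-- Supremum over `g ∈ K` of `ρ (g • x) (g • y)`. -/
noncomputable def supOf {G X : Type*} [SMul G X] (ρ : X → X → ℝ) (K : Set G) (x y : X) : ℝ :=
  ⨆ g : K, ρ ((g : G) • x) ((g : G) • y)

/-- `d_K(x,y) = sup_{g ∈ K} d(g x, g y)`. -/
noncomputable def supD {G X : Type*} [SMul G X] [PseudoMetricSpace X] (K : Set G) (x y : X) : ℝ :=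
  supOf dist K x y

/-- `B` is an `(ε,δ)`-memory set for `A`. -/
def IsMemorySet (G X : Type*) [SMul G X] [PseudoMetricSpace X] (ε δ : ℝ)
    (A B : Finset G) : Prop :=
  (A : Set G) ⊆ (B : Set G) ∧
    ∀ x y : X, supD ((B : Set G) \ (A : Set G)) x y ≤ δ →
      ∃ z : X, supD (B : Set G) x z ≤ ε ∧ supD (Set.univ \ (A : Set G)) y z ≤ ε

/-- The topological Markov property. -/
def TMP (G X : Type*) [SMul G X] [PseudoMetricSpace X] : Prop :=
  ∀ ε > (0 : ℝ), ∃ δ > (0 : ℝ), ∀ A : Finset G, ∃ B : Finset G, IsMemorySet G X ε δ A B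

/-- The strong topological Markov property. -/
def StrongTMP (G X : Type*) [Group G] [DecidableEq G] [MulAction G X]
    [PseudoMetricSpace X] : Prop :=
  ∀ ε > (0 : ℝ), ∃ δ > (0 : ℝ), ∃ F : Finset G, (1 : G) ∈ F ∧
    ∀ A : Finset G, IsMemorySet G X ε δ A (F * A)

/-- `V` is `B`-separated. -/
def Separated {G : Type*} [Mul G] (B V : Set G) : Prop :=
  ∀ v₁ ∈ V, ∀ v₂ ∈ V, v₁ ≠ v₂ → Disjoint (B * ({v₁} : Set G)) (B * ({v₂} : Set G))

/-- `B` is a uniform `(ε,δ)`-memory set for `A`. -/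
def IsUniformMemorySet (G X : Type*) [Group G] [MulAction G X] [PseudoMetricSpace X]
    (ε δ : ℝ) (A B : Finset G) : Prop :=
  IsMemorySet G X ε δ A B ∧
    ∀ V : Finset G, Separated (B : Set G) (V : Set G) →
      ∀ (xv : G → X) (y : X),
        (∀ v ∈ V, supD (((B : Set G) \ (A : Set G)) * ({v} : Set G)) (xv v) y ≤ δ) →
        ∃ z : X, (∀ v ∈ V, supD ((B : Set G) * ({v} : Set G)) z (xv v) ≤ ε) ∧
          supD (Set.univ \ ((A : Set G) * (V : Set G))) z y ≤ ε

/-- The uniform topological Markov property. -/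
def UniformTMP (G X : Type*) [Group G] [MulAction G X] [PseudoMetricSpace X] : Prop :=
  ∀ ε > (0 : ℝ), ∃ δ > (0 : ℝ), ∀ A : Finset G, ∃ B : Finset G,
    IsUniformMemorySet G X ε δ A B

/-- The uniform strong topological Markov property. -/
def UniformStrongTMP (G X : Type*) [Group G] [DecidableEq G] [MulAction G X]
    [PseudoMetricSpace X] : Prop :=
  ∀ ε > (0 : ℝ), ∃ δ > (0 : ℝ), ∃ F : Finset G, (1 : G) ∈ F ∧
    ∀ A : Finset G, IsUniformMemorySet G X ε δ A (F * A)

/-- Expansivity of the action. -/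
def Expansive (G X : Type*) [SMul G X] [PseudoMetricSpace X] : Prop :=
  ∃ c > (0 : ℝ), ∀ x y : X, x ≠ y → ∃ g : G, dist (g • x) (g • y) > c

/-- `(x,y)` is an asymptotic pair. -/
def Asymptotic (G : Type*) {X : Type*} [SMul G X] [PseudoMetricSpace X] (x y : X) : Prop :=
  ∀ ε > (0 : ℝ), ∃ F : Finset G, ∀ g ∉ F, dist (g • x) (g • y) ≤ ε

/-- `(S,δ)` pseudo-orbit. -/
def IsPseudoOrbit {G X : Type*} [Mul G] [SMul G X] [PseudoMetricSpace X]
    (S : Finset G) (δ : ℝ) (w : G → X) : Prop :=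
  ∀ s ∈ S, ∀ g : G, dist (s • w g) (w (s * g)) < δ

/-- `w` is `ε`-traced by `x`. -/
def Traces {G X : Type*} [SMul G X] [PseudoMetricSpace X] (ε : ℝ) (x : X) (w : G → X) : Prop :=
  ∀ g : G, dist (g • x) (w g) ≤ ε

/-- Pseudo-orbit tracing property. -/
def POTP (G X : Type*) [Mul G] [SMul G X] [PseudoMetricSpace X] : Prop :=
  ∀ ε > (0 : ℝ), ∃ δ > (0 : ℝ), ∃ S : Finset G, ∀ w : G → X,
    IsPseudoOrbit S δ w → ∃ x : X, Traces ε x w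

/-- `J` is an independence set for the tuple `U`. -/
def IndepSet {G X : Type*} [SMul G X] {n : ℕ} (U : Fin n → Set X) (J : Set G) : Prop :=
  ∀ I : Finset G, (I : Set G) ⊆ J → I.Nonempty → ∀ φ : G → Fin n,
    (⋂ s ∈ I, (fun x : X => s • x) ⁻¹' U (φ s)).Nonempty

/-- The tuple `U` has positive independence density. -/
def PosIndepDensity (G : Type*) {X : Type*} [SMul G X] {n : ℕ} (U : Fin n → Set X) : Prop :=
  ∃ q > (0 : ℝ), ∀ F : Finset G, ∃ J : Finset G, J ⊆ F ∧
    q * (F.card : ℝ) ≤ (J.card : ℝ) ∧ IndepSet U (J : Set G)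

/-- Orbit IE-tuple. -/
def IETuple (G : Type*) {X : Type*} [SMul G X] [TopologicalSpace X] {n : ℕ}
    (x : Fin n → X) : Prop :=
  ∀ U : Fin n → Set X, (∀ i, IsOpen (U i)) → (∀ i, x i ∈ U i) → PosIndepDensity G U

/-- Minimality of the action. -/
def MinimalAction (G X : Type*) [SMul G X] [TopologicalSpace X] : Prop :=
  ∀ Y : Set X, IsClosed Y → (∀ g : G, ∀ y ∈ Y, g • y ∈ Y) → Y.Nonempty → Y = Set.univ

/-- Følner sequence. -/
def FolnerSeq (G : Type*) [Group G] [DecidableEq G] (F : ℕ → Finset G) : Prop :=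
  (∀ n, (F n).Nonempty) ∧
    ∀ K : Finset G, Filter.Tendsto
      (fun n => ((symmDiff (K * F n) (F n)).card : ℝ) / ((F n).card : ℝ))
      Filter.atTop (nhds 0)

/-- The left shift action of `G` on configurations `G → Λ`, `(g • x) h = x (g⁻¹ h)`. -/
instance shiftAction (G Λ : Type*) [Group G] : MulAction G (G → Λ) where
  smul g x := fun h => x (g⁻¹ * h)
  one_smul x := by
    funext h; show x (1⁻¹ * h) = x h; simp
  mul_smul g₁ g₂ x := by
    funext h; show x ((g₁ * g₂)⁻¹ * h) = x (g₂⁻¹ * (g₁⁻¹ * h)); simp [mul_inv_rev, mul_assoc]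

/-- The cylinder set of configurations agreeing with `p` on `S`. -/
def cylinder {G Λ : Type*} (S : Set G) (p : G → Λ) : Set (G → Λ) :=
  {y | ∀ g ∈ S, y g = p g}

/-- The (topological) support of a measure. -/
def measSupport {α : Type*} [TopologicalSpace α] [MeasurableSpace α]
    (μ : MeasureTheory.Measure α) : Set α :=
  {x | ∀ U : Set α, IsOpen U → x ∈ U → 0 < μ U}

theorem isOpen_cylinder_aux {G Λ : Type*} (t : TopologicalSpace (G → Λ))
    (ht : t = @Pi.topologicalSpace G (fun _ => Λ) (fun _ => ⊥)) (S : Finset G) (p : G → Λ) :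
    @IsOpen _ t (cylinder (S : Set G) p) := by
  subst ht
  let _ : TopologicalSpace Λ := ⊥
  haveI : DiscreteTopology Λ := ⟨rfl⟩
  have h : cylinder (S : Set G) p = Set.pi (S : Set G) (fun g => {p g}) := by
    ext y; simp [cylinder, Set.mem_pi]
  rw [h]
  exact isOpen_set_pi S.finite_toSet (fun _ _ => isOpen_discrete _)

theorem exists_cylinder_aux {G Λ : Type*} (t : TopologicalSpace (G → Λ))
    (ht : t = @Pi.topologicalSpace G (fun _ => Λ) (fun _ => ⊥)) (U : Set (G → Λ))
    (hU : @IsOpen _ t U) (x : G → Λ) (hx : x ∈ U) :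
    ∃ S : Finset G, cylinder (S : Set G) x ⊆ U := by
  subst ht
  let _ : TopologicalSpace Λ := ⊥
  obtain ⟨S, u, hu, hsub⟩ := isOpen_pi_iff.1 hU x hx
  refine ⟨S, fun y hy => hsub ?_⟩
  intro g hg
  rw [hy g hg]
  exact (hu g hg).2

theorem agree_dist_aux {G Λ : Type*} [MetricSpace (G → Λ)] [CompactSpace (G → Λ)]
    (hcompat : (inferInstance : TopologicalSpace (G → Λ)) =
      @Pi.topologicalSpace G (fun _ => Λ) (fun _ => ⊥)) (ε : ℝ) (hε : 0 < ε) :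
    ∃ K : Finset G, ∀ x y : G → Λ, (∀ k ∈ K, x k = y k) → dist x y ≤ ε := by
  classical
  have h1 : ∀ x : G → Λ, ∃ S : Finset G, cylinder (S : Set G) x ⊆ Metric.ball x (ε / 2) :=
    fun x => exists_cylinder_aux _ hcompat _ Metric.isOpen_ball x
      (Metric.mem_ball_self (half_pos hε))
  choose S hS using h1
  obtain ⟨T, -, hT⟩ := isCompact_univ.elim_nhds_subcover
    (fun x : G → Λ => cylinder (S x : Set G) x)
    (fun x _ => (isOpen_cylinder_aux _ hcompat (S x) x).mem_nhds (fun _ _ => rfl))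
  refine ⟨T.biUnion S, fun x y hxy => ?_⟩
  have hx := hT (Set.mem_univ x)
  simp only [Set.mem_iUnion] at hx
  obtain ⟨w, hw, hxw⟩ := hx
  have hyw : y ∈ cylinder (S w : Set G) w := fun g hg => by
    rw [← hxy g (Finset.mem_biUnion.2 ⟨w, hw, hg⟩)]; exact hxw g hg
  have a := Metric.mem_ball.1 (hS w hxw)
  have b := Metric.mem_ball.1 (hS w hyw)
  have c := dist_triangle_right x y w
  linarith

theorem dist_agree_aux {G Λ : Type*} [MetricSpace (G → Λ)] [CompactSpace (G → Λ)]
    (hcompat : (inferInstance : TopologicalSpace (G → Λ)) =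
      @Pi.topologicalSpace G (fun _ => Λ) (fun _ => ⊥)) (K : Finset G) :
    ∃ δ > (0 : ℝ), ∀ x y : G → Λ, dist x y ≤ δ → ∀ k ∈ K, x k = y k := by
  obtain ⟨δ, hδ, h⟩ := lebesgue_number_lemma_of_metric (isCompact_univ (X := G → Λ))
    (c := fun x : G → Λ => cylinder (K : Set G) x)
    (fun x => isOpen_cylinder_aux _ hcompat K x)
    (fun x _ => Set.mem_iUnion.2 ⟨x, fun _ _ => rfl⟩)
  refine ⟨δ / 2, half_pos hδ, fun x y hxy k hk => ?_⟩
  obtain ⟨w, hw⟩ := h x (Set.mem_univ x)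
  have a := hw (Metric.mem_ball_self hδ) k hk
  have b := hw (Metric.mem_ball'.2 (lt_of_le_of_lt hxy (half_lt_self hδ))) k hk
  rw [a, b]

theorem supD_le_aux {G X : Type*} [SMul G X] [PseudoMetricSpace X] (K : Set G) (x y : X)
    (ε : ℝ) (hε : 0 ≤ ε) (h : ∀ g ∈ K, dist (g • x) (g • y) ≤ ε) : supD K x y ≤ ε :=
  Real.iSup_le (fun g => h g g.2) hε

theorem le_supD_aux {G X : Type*} [SMul G X] [PseudoMetricSpace X] [CompactSpace X]
    (K : Set G) (x y : X) (δ : ℝ) (h : supD K x y ≤ δ) (g : G) (hg : g ∈ K) :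
    dist (g • x) (g • y) ≤ δ := by
  refine le_trans ?_ h
  refine le_ciSup (f := fun g : K => dist ((g : G) • x) ((g : G) • y)) ?_ ⟨g, hg⟩
  refine ⟨Metric.diam (Set.univ : Set X), ?_⟩
  rintro _ ⟨g, rfl⟩
  exact Metric.dist_le_diam_of_mem isCompact_univ.isBounded (Set.mem_univ _) (Set.mem_univ _)

/-- Let `X ⊆ Λ^G` be a `G`-subshift and `μ` a Markovian Borel probability
measure on `X`.  Then the shift action of `G` on the support of `μ` has the strong
topological Markov property. -/
theorem stmt16 (G Λ : Type*) [Group G] [Countable G] [Infinite G] [DecidableEq G]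
    [Fintype Λ] [Nonempty Λ]
    [MetricSpace (G → Λ)] [CompactSpace (G → Λ)]
    [MeasurableSpace (G → Λ)] [BorelSpace (G → Λ)]
    (hcompat : (inferInstance : TopologicalSpace (G → Λ)) =
      @Pi.topologicalSpace G (fun _ => Λ) (fun _ => ⊥))
    (X : Set (G → Λ)) (hXclosed : IsClosed X)
    (hXinv : ∀ g : G, ∀ x ∈ X, g • x ∈ X)
    (μ : MeasureTheory.Measure (G → Λ)) [MeasureTheory.IsProbabilityMeasure μ]
    (hμX : μ X = 1)
    (hMarkov : ∃ F : Finset G, (1 : G) ∈ F ∧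
      ∀ A : Finset G, ∀ p : G → Λ, ∀ x ∈ measSupport μ,
        ∀ B : Finset G, A * F ⊆ B →
          μ (cylinder (A : Set G) p ∩ cylinder (((B : Finset G) : Set G) \ (A : Set G)) x) /
              μ (cylinder (((B : Finset G) : Set G) \ (A : Set G)) x) =
            μ (cylinder (A : Set G) p ∩
                cylinder (((A * F : Finset G) : Set G) \ (A : Set G)) x) /
              μ (cylinder (((A * F : Finset G) : Set G) \ (A : Set G)) x)) :
    ∀ ε > (0 : ℝ), ∃ δ > (0 : ℝ), ∃ F : Finset G, (1 : G) ∈ F ∧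
      ∀ A : Finset G, ∀ x ∈ measSupport μ, ∀ y ∈ measSupport μ,
        supD (((F * A : Finset G) : Set G) \ (A : Set G)) x y ≤ δ →
        ∃ z ∈ measSupport μ,
          supD ((F * A : Finset G) : Set G) x z ≤ ε ∧
          supD (Set.univ \ (A : Set G)) y z ≤ ε := by
  classical
  obtain ⟨F₀, hF₀, hM⟩ := hMarkov
  intro ε hε
  obtain ⟨K₀, hK₀⟩ := agree_dist_aux hcompat ε hε
  obtain ⟨K, hK1, hK⟩ : ∃ K : Finset G, (1 : G) ∈ K ∧
      ∀ x y : G → Λ, (∀ k ∈ K, x k = y k) → dist x y ≤ ε :=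
    ⟨insert 1 K₀, Finset.mem_insert_self _ _,
      fun x y h => hK₀ x y fun k hk => h k (Finset.mem_insert_of_mem hk)⟩
  obtain ⟨δ, hδ, hδK⟩ := dist_agree_aux hcompat K
  have hFmem : ∀ k ∈ K, ∀ f ∈ F₀, ∀ k' ∈ K, k * f⁻¹ * k'⁻¹ ∈ K * F₀⁻¹ * K⁻¹ :=
    fun k hk f hf k' hk' => Finset.mul_mem_mul
      (Finset.mul_mem_mul hk (Finset.inv_mem_inv hf)) (Finset.inv_mem_inv hk')
  refine ⟨δ, hδ, K * F₀⁻¹ * K⁻¹, by simpa using hFmem 1 hK1 1 hF₀ 1 hK1, ?_⟩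
  intro A x hx y hy hxy
  set F := K * F₀⁻¹ * K⁻¹ with hF
  have hag : ∀ g ∈ F * A, g ∉ A → ∀ k ∈ K, x (g⁻¹ * k) = y (g⁻¹ * k) := fun g hg hgA k hk =>
    hδK _ _ (le_supD_aux _ _ _ _ hxy g ⟨hg, hgA⟩) k hk
  -- the set of sites that only `A` sees
  obtain ⟨C, hC⟩ : ∃ C : Finset G, ∀ h, h ∈ C ↔ ∀ k ∈ K, k * h⁻¹ ∈ A := by
    refine ⟨A⁻¹.filter (fun h => ∀ k ∈ K, k * h⁻¹ ∈ A), fun h => ?_⟩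
    rw [Finset.mem_filter]
    refine ⟨fun h => h.2, fun hh => ⟨?_, hh⟩⟩
    have := hh 1 hK1
    rw [one_mul] at this
    simpa using Finset.inv_mem_inv this
  have hCF : ∀ h ∈ C * F₀, h ∉ C → x h = y h := by
    intro h hh hhC
    obtain ⟨c, hc, f, hf, rfl⟩ := Finset.mem_mul.1 hh
    rw [hC] at hhC
    push Not at hhC
    obtain ⟨k, hk, hkA⟩ := hhC
    have hcA := (hC c).1 hc 1 hK1
    have e : k * (c * f)⁻¹ = (k * f⁻¹ * 1⁻¹) * (1 * c⁻¹) := by group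
    have := hag (k * (c * f)⁻¹)
      (by rw [e]; exact Finset.mul_mem_mul (hFmem k hk f hf 1 hK1) hcA) hkA k hk
    simpa using this
  let z : G → Λ := fun h => if h ∈ C then x h else y h
  have hzC : ∀ h ∈ C, z h = x h := fun h hh => if_pos hh
  have hzC' : ∀ h, h ∉ C → z h = y h := fun h hh => if_neg hh
  have hsubC : C ⊆ C * F₀ := fun c hc => by
    simpa using Finset.mul_mem_mul hc hF₀
  refine ⟨z, ?_, ?_, ?_⟩
  · intro U hU hzU
    obtain ⟨S, hS⟩ := exists_cylinder_aux _ hcompat U hU z hzU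
    have hm := hM C z y hy (S ∪ C * F₀) Finset.subset_union_right
    have hpos : 0 < μ (cylinder (C : Set G) z ∩
        cylinder (((C * F₀ : Finset G) : Set G) \ (C : Set G)) y) := by
      refine lt_of_lt_of_le (hx _ (isOpen_cylinder_aux _ hcompat (C * F₀) x) (fun _ _ => rfl))
        (MeasureTheory.measure_mono ?_)
      intro w hw
      refine ⟨fun g hg => ?_, fun g hg => ?_⟩
      · rw [hzC g hg]; exact hw g (hsubC hg)
      · rw [← hCF g hg.1 hg.2]; exact hw g hg.1
    have hne : μ (cylinder (C : Set G) z ∩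
        cylinder (((S ∪ C * F₀ : Finset G) : Set G) \ (C : Set G)) y) ≠ 0 := by
      intro h0
      rw [h0, ENNReal.zero_div] at hm
      rcases ENNReal.div_eq_zero_iff.1 hm.symm with h | h
      · exact hpos.ne' h
      · exact MeasureTheory.measure_ne_top _ _ h
    refine lt_of_lt_of_le (pos_iff_ne_zero.2 hne) (MeasureTheory.measure_mono ?_)
    refine fun w hw => hS fun g hg => ?_
    by_cases hgC : g ∈ C
    · exact hw.1 g hgC
    · rw [hzC' g hgC]
      exact hw.2 g ⟨Finset.mem_coe.2 (Finset.mem_union_left _ hg), hgC⟩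
  · refine supD_le_aux _ _ _ _ hε.le fun g hg => hK _ _ fun k hk => ?_
    change x (g⁻¹ * k) = z (g⁻¹ * k)
    by_cases hc : g⁻¹ * k ∈ C
    · rw [hzC _ hc]
    rw [hzC' _ hc]
    by_cases hgA : g ∈ A
    · rw [hC] at hc
      push Not at hc
      obtain ⟨k', hk', hkA⟩ := hc
      have e : k' * (g⁻¹ * k)⁻¹ = (k' * 1⁻¹ * k⁻¹) * g := by group
      have := hag (k' * (g⁻¹ * k)⁻¹)
        (by rw [e]; exact Finset.mul_mem_mul (hFmem k' hk' 1 hF₀ k hk) hgA) hkA k' hk'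
      simpa using this
    · exact hag g hg hgA k hk
  · refine supD_le_aux _ _ _ _ hε.le fun g hg => hK _ _ fun k hk => ?_
    change y (g⁻¹ * k) = z (g⁻¹ * k)
    refine (hzC' _ fun hc => hg.2 ?_).symm
    simpa using (hC _).1 hc k hk
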